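/- Let G = (V,E) be a finite simple graph, let x : E → [0,1] be a fractional matching of G, let 0 < β ≤ 1/2, and let C̃ ⊆ V be a set of vertices such that every v ∈ C̃ satisfies ∑_{e ∋ v} x_e ≥ 1 - β. Then in the randomized rounding process, with probability at least 1 - 2·exp(-|C̃|/5000), the number of good edges satisfies f(X) ≥ |C̃|/50; in particular, with this probability the process yields a matching of G of size at least |C̃|/50. -/

import Mathlib

open Finset

variable {V : Type*}

/-- The probability weight of a configuration `X` of the randomized rounding process: each
vertex `v ∈ C̃` independently picks a neighbor `u` with probability `x_{{u,v}}/10`, and picks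
`⋆` (encoded as `none`) with probability `1 - (∑_{e ∋ v} x_e)/10`. -/
noncomputable def roundWeight [Fintype V] [DecidableEq V] (G : SimpleGraph V)
    [DecidableRel G.Adj] (x : Sym2 V → ℝ) (Ct : Finset V)
    (X : {v // v ∈ Ct} → Option V) : ℝ :=
  ∏ v : {v // v ∈ Ct},
    match X v with
    | none => 1 - (∑ e ∈ G.edgeFinset.filter (fun e => v.1 ∈ e), x e) / 10
    | some u => if G.Adj v.1 u then x s(v.1, u) / 10 else 0

/-- The (multi)set of edges `H_X = {{v, X_v} : v ∈ C̃, X_v ≠ ⋆}` proposed by a configuration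
`X` of the randomized rounding process. -/
def proposedEdges [DecidableEq V] (Ct : Finset V)
    (X : {v // v ∈ Ct} → Option V) : Finset (Sym2 V) :=
  (Finset.univ.filter (fun v : {v // v ∈ Ct} => (X v).isSome)).image
    (fun v => s(v.1, (X v).getD v.1))

/-- `f(X)`: the number of good edges of `H_X`, i.e. edges of `H_X` sharing no endpoint with
any other edge of `H_X`. The good edges form a matching. -/
def goodCount [Fintype V] [DecidableEq V] (Ct : Finset V)
    (X : {v // v ∈ Ct} → Option V) : ℕ :=
  ((proposedEdges Ct X).filter (fun e =>
    ∀ f ∈ proposedEdges Ct X, f ≠ e → ∀ w : V, w ∈ e → w ∉ f)).card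

/-!
Call a proposer isolated if its edge is disjoint from the edges proposed by all other vertices.
Isolated proposers propose distinct good edges, so it suffices to bound their number from below.
Changing one choice changes this number by at most `2`: the lost proposers have pairwise disjoint
edges, each meeting the proposer or the endpoint of its new edge. McDiarmid's inequality then gives
concentration around the mean.

Conditionally on `v` proposing `{v, u}`, a union bound shows that some other proposal meets
`{v, u}` with probability at most a tenth of `d v + d u`, plus another `d u / 10` if `u ∈ C̃`, where
`d` is the fractional degree. Summing over `v ∈ C̃` and exploiting the symmetry in `u` and `v`, the
mean is at least `17/400 |C̃|`, which exceeds the target `|C̃|/50` by `9/400 |C̃|`.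
-/

open MeasureTheory ProbabilityTheory
open scoped NNReal

section BoundedDifferences

theorem hasSubgaussianMGF_prod {α β : Type*} {mα : MeasurableSpace α} {mβ : MeasurableSpace β}
    {μ : Measure α} [SFinite μ] {ν : Measure β} [SFinite ν] {f : α × β → ℝ} {m : α → ℝ}
    {cα cβ : ℝ≥0} (hf : AEStronglyMeasurable f (μ.prod ν)) (hα : HasSubgaussianMGF m cα μ)
    (hβ : ∀ a, HasSubgaussianMGF (fun b => f (a, b) - m a) cβ ν) :
    HasSubgaussianMGF f (cα + cβ) (μ.prod ν) := by
  have exp_eq (t : ℝ) (a : α) (b : β) :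
      Real.exp (t * f (a, b)) = Real.exp (t * m a) * Real.exp (t * (f (a, b) - m a)) := by
    rw [← Real.exp_add]
    ring_nf
  have inner_le (t : ℝ) (a : α) : ∫ b, Real.exp (t * f (a, b)) ∂ν ≤
      Real.exp (t * m a) * Real.exp (cβ * t ^ 2 / 2) := by
    simp only [exp_eq, integral_const_mul]
    gcongr
    exact (hβ a).mgf_le t
  have outer_integrable (t : ℝ) :
      Integrable (fun a => Real.exp (t * m a) * Real.exp (cβ * t ^ 2 / 2)) μ :=
    (hα.integrable_exp_mul t).mul_const _
  have exp_integrable (t : ℝ) : Integrable (fun z => Real.exp (t * f z)) (μ.prod ν) := by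
    have hmeas : AEStronglyMeasurable (fun z => Real.exp (t * f z)) (μ.prod ν) :=
      Real.continuous_exp.comp_aestronglyMeasurable (hf.const_mul t)
    refine (integrable_prod_iff hmeas).2 ⟨.of_forall fun a => ?_, ?_⟩
    · simpa only [exp_eq] using ((hβ a).integrable_exp_mul t).const_mul _
    · simp only [Real.norm_eq_abs, Real.abs_exp]
      refine (outer_integrable t).mono' hmeas.integral_prod_right' (.of_forall fun a => ?_)
      rw [Real.norm_of_nonneg (integral_nonneg fun b => (Real.exp_pos _).le)]
      exact inner_le t a
  refine ⟨exp_integrable, fun t => ?_⟩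
  calc mgf f (μ.prod ν) t = ∫ a, ∫ b, Real.exp (t * f (a, b)) ∂ν ∂μ :=
        integral_prod _ (exp_integrable t)
    _ ≤ ∫ a, Real.exp (t * m a) * Real.exp (cβ * t ^ 2 / 2) ∂μ :=
        integral_mono (exp_integrable t).integral_prod_left (outer_integrable t) (inner_le t)
    _ ≤ Real.exp (cα * t ^ 2 / 2) * Real.exp (cβ * t ^ 2 / 2) := by
        rw [integral_mul_const]
        gcongr
        exact hα.mgf_le t
    _ = Real.exp (↑(cα + cβ) * t ^ 2 / 2) := by
        rw [← Real.exp_add, NNReal.coe_add]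
        ring_nf

theorem hasSubgaussianMGF_of_sub_le {α : Type*} {mα : MeasurableSpace α} {μ : Measure α}
    [IsProbabilityMeasure μ] {f : α → ℝ} {c : ℝ≥0} (hf : AEMeasurable f μ)
    (hc : ∀ a b, f a - f b ≤ c) :
    HasSubgaussianMGF (fun a => f a - ∫ b, f b ∂μ) ((c / 2) ^ 2) μ := by
  obtain ⟨z⟩ := μ.nonempty_of_neZero
  have hbdd : BddBelow (Set.range f) :=
    ⟨f z - c, Set.forall_mem_range.2 fun a => by linarith [hc z a]⟩
  have : Nonempty α := ⟨z⟩
  have hmem (a : α) : f a ∈ Set.Icc (⨅ b, f b) ((⨅ b, f b) + c) := by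
    refine ⟨ciInf_le hbdd a, ?_⟩
    have := le_ciInf fun b => sub_le_comm.1 (hc a b)
    linarith
  simpa using hasSubgaussianMGF_of_mem_Icc hf (.of_forall hmem)

theorem hasSubgaussianMGF_prod_sub_integral {α β : Type*} {mα : MeasurableSpace α}
    {mβ : MeasurableSpace β} {μ : Measure α} [IsProbabilityMeasure μ] {ν : Measure β}
    [IsProbabilityMeasure ν] {f : α × β → ℝ} {c cβ : ℝ≥0} (hf : Integrable f (μ.prod ν))
    (hc : ∀ a a' b, f (a, b) - f (a', b) ≤ c)
    (hβ : ∀ a, HasSubgaussianMGF (fun b => f (a, b) - ∫ b', f (a, b') ∂ν) cβ ν) :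
    HasSubgaussianMGF (fun z => f z - ∫ z', f z' ∂μ.prod ν) ((c / 2) ^ 2 + cβ) (μ.prod ν) := by
  have hint (a : α) : Integrable (fun b => f (a, b)) ν := by
    simpa [Function.comp_def, Pi.add_def] using
      (hβ a).integrable.add (integrable_const (∫ b', f (a, b') ∂ν))
  have hmean (a a' : α) : ∫ b, f (a, b) ∂ν - ∫ b, f (a', b) ∂ν ≤ c := by
    rw [← integral_sub (hint a) (hint a')]
    simpa using integral_mono ((hint a).sub (hint a')) (integrable_const (c : ℝ)) (hc a a')
  have hα := hasSubgaussianMGF_of_sub_le hf.integral_prod_left.aemeasurable hmean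
  rw [← integral_prod f hf] at hα
  exact hasSubgaussianMGF_prod (hf.aestronglyMeasurable.sub aestronglyMeasurable_const) hα
    fun a => by simpa only [sub_sub_sub_cancel_right] using hβ a

theorem hasSubgaussianMGF_sub_integral_of_comp {α β : Type*} {mα : MeasurableSpace α}
    {mβ : MeasurableSpace β} {μ : Measure α} {ν : Measure β} {e : β ≃ᵐ α} {f : α → ℝ} {c : ℝ≥0}
    (he : MeasurePreserving e ν μ)
    (hf : HasSubgaussianMGF (fun b => f (e b) - ∫ b', f (e b') ∂ν) c ν) :
    HasSubgaussianMGF (fun a => f a - ∫ a', f a' ∂μ) c μ := by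
  rw [he.integral_comp', ← (he.symm e).map_eq] at hf
  simpa [Function.comp_def] using hf.of_map e.symm.measurable.aemeasurable

/-- The hypothesis of McDiarmid's inequality: changing only the `i`-th coordinate changes `f` by
at most `c i`. Exchanging `x` and `y` turns the one-sided bound into the two-sided one. -/
def HasBoundedDifferences {ι : Type*} {Ω : ι → Type*} (f : (∀ i, Ω i) → ℝ) (c : ι → ℝ≥0) : Prop :=
  ∀ i x y, (∀ j, j ≠ i → x j = y j) → f x - f y ≤ c i

namespace HasBoundedDifferences

variable {ι : Type*} {Ω : ι → Type*} {f : (∀ i, Ω i) → ℝ} {c : ι → ℝ≥0}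

theorem sub_le_sum [Fintype ι] (hf : HasBoundedDifferences f c) (x y : ∀ i, Ω i) :
    f x - f y ≤ ∑ i, (c i : ℝ) := by
  classical
  have hybrid (s : Finset ι) : f (s.piecewise x y) - f y ≤ ∑ i ∈ s, (c i : ℝ) := by
    induction s using Finset.induction_on with
    | empty => simp
    | insert i s hi ih =>
      have hstep := hf i ((insert i s).piecewise x y) (s.piecewise x y) fun j hj => by
        simp [hj]
      rw [Finset.sum_insert hi]
      linarith
  simpa using hybrid Finset.univ

theorem integrable [Finite ι] {mΩ : MeasurableSpace (∀ i, Ω i)} {μ : Measure (∀ i, Ω i)}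
    [IsFiniteMeasure μ] (hf : HasBoundedDifferences f c) (hfm : AEStronglyMeasurable f μ) :
    Integrable f μ := by
  have := Fintype.ofFinite ι
  rcases isEmpty_or_nonempty (∀ i, Ω i) with h | ⟨⟨z⟩⟩
  · simp [Subsingleton.elim f 0]
  refine .of_bound hfm (|f z| + ∑ i, (c i : ℝ)) (.of_forall fun x => abs_le.2 ?_)
  have hxz := hf.sub_le_sum x z
  have hzx := hf.sub_le_sum z x
  constructor <;> linarith [le_abs_self (f z), neg_abs_le (f z)]

theorem comp_insertNth {n : ℕ} {Ω : Fin (n + 1) → Type*} {f : (∀ i, Ω i) → ℝ}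
    {c : Fin (n + 1) → ℝ≥0} (hf : HasBoundedDifferences f c) (k : Fin (n + 1)) (a : Ω k) :
    HasBoundedDifferences (fun y => f (k.insertNth a y)) fun i => c (k.succAbove i) := by
  refine fun i x y hxy => hf _ _ _ fun j hj => ?_
  cases j using k.succAboveCases with
  | x => simp
  | p j => simpa using hxy j fun h => hj (h ▸ rfl)

theorem comp_piCongrLeft {ι' : Type*} (hf : HasBoundedDifferences f c) (e : ι' ≃ ι) :
    HasBoundedDifferences (fun x => f (Equiv.piCongrLeft Ω e x)) fun i => c (e i) := by
  refine fun i x y hxy => hf _ _ _ fun j hj => ?_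
  obtain ⟨j, rfl⟩ := e.surjective j
  simpa using hxy j fun h => hj (h ▸ rfl)

theorem hasSubgaussianMGF_fin : ∀ {n : ℕ} {Ω : Fin n → Type*} [∀ i, MeasurableSpace (Ω i)]
    {f : (∀ i, Ω i) → ℝ} {c : Fin n → ℝ≥0} (μ : ∀ i, Measure (Ω i))
    [∀ i, IsProbabilityMeasure (μ i)], HasBoundedDifferences f c → Measurable f →
      HasSubgaussianMGF (fun x => f x - ∫ y, f y ∂Measure.pi μ) (∑ i, (c i / 2) ^ 2)
        (Measure.pi μ)
  | 0, Ω, _, f, c, μ, _, _, _ => by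
    have hconst (x : ∀ i, Ω i) : f x - ∫ y, f y ∂Measure.pi μ = 0 := by
      rw [Measure.pi_of_empty μ, integral_dirac, Subsingleton.elim x, sub_self]
    simp [hconst]
  | n + 1, Ω, _, f, c, μ, _, hf, hfm => by
    let e := (MeasurableEquiv.piFinSuccAbove Ω 0).symm
    have he : MeasurePreserving e ((μ 0).prod (Measure.pi fun j => μ (Fin.succAbove 0 j)))
        (Measure.pi μ) := (measurePreserving_piFinSuccAbove μ 0).symm _
    have hem : Measurable (f ∘ e) := hfm.comp e.measurable
    have hsection (a : Ω 0) := hasSubgaussianMGF_fin (fun j => μ (Fin.succAbove 0 j))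
      (hf.comp_insertNth 0 a) (hem.comp measurable_prodMk_left)
    refine hasSubgaussianMGF_sub_integral_of_comp he ?_
    rw [Fin.sum_univ_succAbove _ 0]
    refine hasSubgaussianMGF_prod_sub_integral
      (he.integrable_comp_of_integrable (hf.integrable hfm.aestronglyMeasurable))
      (fun a a' y => hf 0 _ _ fun j hj => ?_) hsection
    obtain ⟨k, rfl⟩ := Fin.exists_succAbove_eq hj
    exact (Fin.insertNth_apply_succAbove 0 a y k).trans
      (Fin.insertNth_apply_succAbove 0 a' y k).symm

variable [∀ i, MeasurableSpace (Ω i)]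

theorem hasSubgaussianMGF [Fintype ι] (μ : ∀ i, Measure (Ω i)) [∀ i, IsProbabilityMeasure (μ i)]
    (hf : HasBoundedDifferences f c) (hfm : Measurable f) :
    HasSubgaussianMGF (fun x => f x - ∫ y, f y ∂Measure.pi μ) (∑ i, (c i / 2) ^ 2)
      (Measure.pi μ) := by
  let e := (Fintype.equivFin ι).symm
  refine hasSubgaussianMGF_sub_integral_of_comp (measurePreserving_piCongrLeft μ e) ?_
  rw [← e.sum_comp]
  exact hasSubgaussianMGF_fin (fun i => μ (e i)) (hf.comp_piCongrLeft e)
    (hfm.comp (MeasurableEquiv.piCongrLeft Ω e).measurable)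

theorem measureReal_le_integral_sub_le [Fintype ι] (μ : ∀ i, Measure (Ω i))
    [∀ i, IsProbabilityMeasure (μ i)] (hf : HasBoundedDifferences f c) (hfm : Measurable f)
    {s : ℝ} (hs : 0 ≤ s) :
    (Measure.pi μ).real {x | f x ≤ ∫ y, f y ∂Measure.pi μ - s} ≤
      Real.exp (-2 * s ^ 2 / ∑ i, (c i : ℝ) ^ 2) := by
  have htail := (hf.hasSubgaussianMGF μ hfm).neg.measure_ge_le hs
  have hset : {x | f x ≤ ∫ y, f y ∂Measure.pi μ - s} =
      {x | s ≤ (-fun x => f x - ∫ y, f y ∂Measure.pi μ) x} := by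
    ext x
    simp only [Set.mem_ofPred_eq, Pi.neg_apply, neg_sub, le_sub_comm]
  have hvar : 2 * ((∑ i, (c i / 2) ^ 2 : ℝ≥0) : ℝ) = (∑ i, (c i : ℝ) ^ 2) / 2 := by
    push_cast
    simp only [div_pow, ← Finset.sum_div]
    ring
  rw [hvar] at htail
  rw [hset]
  convert htail using 2
  rw [div_div_eq_mul_div]
  ring

theorem sum_filter_prod_le [Fintype ι] [DecidableEq ι] {α : ι → Type*} [∀ i, Fintype (α i)]
    {f : (∀ i, α i) → ℝ} (hf : HasBoundedDifferences f c) {p : ∀ i, α i → ℝ}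
    (hp : ∀ i a, 0 ≤ p i a) (hp1 : ∀ i, ∑ a, p i a = 1) {s : ℝ} (hs : 0 ≤ s) :
    ∑ x with f x ≤ ∑ y, (∏ i, p i (y i)) * f y - s, ∏ i, p i (x i) ≤
      Real.exp (-2 * s ^ 2 / ∑ i, (c i : ℝ) ^ 2) := by
  let _ (i : ι) : MeasurableSpace (α i) := ⊤
  have hsum (i : ι) : ∑ a, ENNReal.ofReal (p i a) = 1 := by
    rw [← ENNReal.ofReal_sum_of_nonneg fun a _ => hp i a, hp1, ENNReal.ofReal_one]
  let q (i : ι) : PMF (α i) := PMF.ofFintype (fun a => ENNReal.ofReal (p i a)) (hsum i)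
  let μ (i : ι) : Measure (α i) := (q i).toMeasure
  have hμ (x : ∀ i, α i) : (Measure.pi μ).real {x} = ∏ i, p i (x i) := by
    rw [measureReal_def, Measure.pi_singleton, ENNReal.toReal_prod]
    refine Finset.prod_congr rfl fun i _ => ?_
    rw [PMF.toMeasure_apply_singleton _ _ (measurableSet_singleton _), PMF.ofFintype_apply,
      ENNReal.toReal_ofReal (hp i _)]
  have htail := hf.measureReal_le_integral_sub_le μ (measurable_of_finite f) hs
  rw [integral_fintype .of_finite] at htail
  simp only [hμ, smul_eq_mul] at htail
  rw [← Finset.coe_filter_univ, ← sum_measureReal_singleton] at htail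
  simpa only [hμ] using htail

end HasBoundedDifferences

end BoundedDifferences

section Isolation

variable [DecidableEq V] {Ct : Finset V} {X Y : {v // v ∈ Ct} → Option V}

/-- The endpoints of the edge proposed by `v` when it picks `o`; there are none if it picks `⋆`. -/
def proposalEndpoints (v : V) (o : Option V) : Finset V :=
  o.elim ∅ fun u => {v, u}

/-- The proposers whose edge is disjoint from the edge proposed by any other vertex. Their edges
are good, but not conversely: an edge proposed by both of its endpoints can be good. -/
def isolatedProposers (Ct : Finset V) (X : {v // v ∈ Ct} → Option V) : Finset {v // v ∈ Ct} :=
  {i | (X i).isSome ∧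
    ∀ j, j ≠ i → Disjoint (proposalEndpoints i.1 (X i)) (proposalEndpoints j.1 (X j))}

theorem mem_isolatedProposers {i : {v // v ∈ Ct}} :
    i ∈ isolatedProposers Ct X ↔ (X i).isSome ∧
      ∀ j, j ≠ i → Disjoint (proposalEndpoints i.1 (X i)) (proposalEndpoints j.1 (X j)) := by
  simp [isolatedProposers]

theorem eq_of_mem_proposalEndpoints {i j : {v // v ∈ Ct}} {w : V}
    (hi : i ∈ isolatedProposers Ct X) (hwi : w ∈ proposalEndpoints i.1 (X i))
    (hwj : w ∈ proposalEndpoints j.1 (X j)) : i = j := by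
  by_contra hij
  exact Finset.disjoint_left.1 ((mem_isolatedProposers.1 hi).2 j (Ne.symm hij)) hwi hwj

theorem mem_proposalEndpoints_self {v : V} {o : Option V} :
    v ∈ proposalEndpoints v o ↔ o.isSome := by
  cases o <;> simp [proposalEndpoints]

theorem mem_mk_getD_iff {v w : V} {o : Option V} (ho : o.isSome) :
    w ∈ s(v, o.getD v) ↔ w ∈ proposalEndpoints v o := by
  obtain ⟨u, rfl⟩ := Option.isSome_iff_exists.1 ho
  simp [proposalEndpoints]

theorem card_insert_proposalEndpoints_le (v : V) (o : Option V) :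
    #(insert v (proposalEndpoints v o)) ≤ 2 := by
  cases o <;> simp [proposalEndpoints, Finset.card_le_two]

theorem exists_mem_insert_proposalEndpoints_of_notMem {i k : {v // v ∈ Ct}}
    (h : ∀ j, j ≠ i → X j = Y j) (hX : k ∈ isolatedProposers Ct X)
    (hY : k ∉ isolatedProposers Ct Y) :
    ∃ w ∈ insert i.1 (proposalEndpoints i.1 (Y i)), w ∈ proposalEndpoints k.1 (X k) := by
  have hk := mem_isolatedProposers.1 hX
  by_cases hki : k = i
  · subst hki
    exact ⟨k.1, Finset.mem_insert_self _ _, mem_proposalEndpoints_self.2 hk.1⟩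
  · obtain ⟨j, hjk, hmeet⟩ : ∃ j, j ≠ k ∧
        ¬ Disjoint (proposalEndpoints k.1 (X k)) (proposalEndpoints j.1 (Y j)) := by
      simpa [mem_isolatedProposers, ← h k hki, hk.1] using hY
    obtain rfl : j = i := by
      by_contra hji
      exact hmeet (h j hji ▸ hk.2 j hjk)
    obtain ⟨w, hwk, hwj⟩ := Finset.not_disjoint_iff.1 hmeet
    exact ⟨w, Finset.mem_insert_of_mem hwj, hwk⟩

theorem card_isolatedProposers_le_add_two {i : {v // v ∈ Ct}} (h : ∀ j, j ≠ i → X j = Y j) :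
    #(isolatedProposers Ct X) ≤ #(isolatedProposers Ct Y) + 2 := by
  have hlost : #(isolatedProposers Ct X \ isolatedProposers Ct Y) ≤ 2 := by
    refine (Finset.card_le_card_of_forall_subsingleton
      (fun k w => w ∈ proposalEndpoints k.1 (X k)) (fun k hk => ?_) fun w _ k hk l hl => ?_).trans
      (card_insert_proposalEndpoints_le i.1 (Y i))
    · obtain ⟨hX, hY⟩ := Finset.mem_sdiff.1 hk
      exact exists_mem_insert_proposalEndpoints_of_notMem h hX hY
    · exact eq_of_mem_proposalEndpoints (Finset.mem_sdiff.1 hk.1).1 hk.2 hl.2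
  have := Finset.card_le_card_sdiff_add_card (s := isolatedProposers Ct X)
    (t := isolatedProposers Ct Y)
  omega

theorem hasBoundedDifferences_card_isolatedProposers (Ct : Finset V) :
    HasBoundedDifferences (fun X => (#(isolatedProposers Ct X) : ℝ)) fun _ => 2 :=
  fun _ X Y h => by
    have : (#(isolatedProposers Ct X) : ℝ) ≤ #(isolatedProposers Ct Y) + 2 := mod_cast
      card_isolatedProposers_le_add_two h
    simpa [add_comm] using this

theorem card_isolatedProposers_le_goodCount [Fintype V] :
    #(isolatedProposers Ct X) ≤ goodCount Ct X := by
  refine Finset.card_le_card_of_injOn (fun i => s(i.1, (X i).getD i.1)) (fun i hi => ?_)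
    fun i hi j hj hij => ?_
  · have hiX := (mem_isolatedProposers.1 hi).1
    simp only [proposedEdges, Finset.coe_filter, Set.mem_ofPred_eq, Finset.mem_image,
      Finset.mem_filter, Finset.mem_univ, true_and]
    refine ⟨⟨i, hiX, rfl⟩, ?_⟩
    rintro _ ⟨j, hjX, rfl⟩ hne w hwi hwj
    rw [mem_mk_getD_iff hiX] at hwi
    rw [mem_mk_getD_iff hjX] at hwj
    exact hne (by rw [eq_of_mem_proposalEndpoints hi hwi hwj])
  · have hiX := (mem_isolatedProposers.1 hi).1
    have hjX := (mem_isolatedProposers.1 hj).1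
    refine eq_of_mem_proposalEndpoints hi (mem_proposalEndpoints_self.2 hiX) ?_
    rw [← mem_mk_getD_iff hjX]
    exact (show s(i.1, (X i).getD i.1) = s(j.1, (X j).getD j.1) from hij) ▸ Sym2.mem_mk_left _ _

end Isolation

section Expectation

theorem one_sub_sum_one_sub_le_prod {ι R : Type*} [CommRing R] [LinearOrder R]
    [IsStrictOrderedRing R] {s : Finset ι} {a : ι → R} (h0 : ∀ i ∈ s, 0 ≤ a i)
    (h1 : ∀ i ∈ s, a i ≤ 1) : 1 - ∑ i ∈ s, (1 - a i) ≤ ∏ i ∈ s, a i := by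
  classical
  induction s using Finset.induction_on with
  | empty => simp
  | insert i s hi ih =>
    rw [Finset.sum_insert hi, Finset.prod_insert hi]
    simp only [Finset.mem_insert, forall_eq_or_imp] at h0 h1
    have hprod := Finset.prod_le_one h0.2 h1.2
    linarith [ih h0.2 h1.2, mul_nonneg (sub_nonneg.2 h1.1) (sub_nonneg.2 hprod)]

theorem sum_sum_mul_sub_eq_zero {ι R : Type*} [NonUnitalNonAssocRing R] (s : Finset ι)
    {y : ι → ι → R} (hy : ∀ i j, y i j = y j i) (d : ι → R) :
    ∑ i ∈ s, ∑ j ∈ s, y i j * (d i - d j) = 0 := by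
  simp only [mul_sub, Finset.sum_sub_distrib]
  rw [sub_eq_zero, Finset.sum_comm]
  simp only [hy]

variable [Fintype V] {y : V → V → ℝ}

/-- A fractional matching given by its symmetric weight matrix: `y v u` is the weight of the edge
`{v, u}`, which is `0` for non-edges. -/
structure IsFractionalMatching (y : V → V → ℝ) : Prop where
  nonneg : ∀ v u, 0 ≤ y v u
  symm : ∀ v u, y v u = y u v
  sum_le_one : ∀ v, ∑ u, y v u ≤ 1

/-- The fractional degree of `v`: the total weight of the edges at `v`. -/
def fractionalDegree (y : V → V → ℝ) (v : V) : ℝ :=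
  ∑ u, y v u

/-- The distribution of the choice of the vertex `v` in the rounding process. -/
noncomputable def proposalProb (y : V → V → ℝ) (v : V) : Option V → ℝ
  | none => 1 - fractionalDegree y v / 10
  | some u => y v u / 10

theorem sum_proposalProb (y : V → V → ℝ) (v : V) : ∑ o, proposalProb y v o = 1 := by
  simp [Fintype.sum_option, proposalProb, fractionalDegree, Finset.sum_div]

namespace IsFractionalMatching

theorem fractionalDegree_nonneg (hy : IsFractionalMatching y) (v : V) :
    0 ≤ fractionalDegree y v :=
  Finset.sum_nonneg fun u _ => hy.nonneg v u

theorem proposalProb_nonneg (hy : IsFractionalMatching y) (v : V) (o : Option V) :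
    0 ≤ proposalProb y v o := by
  cases o with
  | none =>
    have := hy.sum_le_one v
    simp only [proposalProb, fractionalDegree]
    linarith
  | some u => exact div_nonneg (hy.nonneg v u) (by norm_num)

theorem sum_filter_proposalProb_le_one (hy : IsFractionalMatching y) (v : V)
    (P : Option V → Prop) [DecidablePred P] : ∑ o with P o, proposalProb y v o ≤ 1 :=
  (Finset.sum_le_univ_sum_of_nonneg fun o => hy.proposalProb_nonneg v o).trans
    (sum_proposalProb y v).le

end IsFractionalMatching

variable [DecidableEq V] {Ct : Finset V}

theorem sum_filter_isolated_and_eq_some (y : V → V → ℝ) (i : {v // v ∈ Ct}) (u : V) :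
    ∑ X : {v // v ∈ Ct} → Option V with i ∈ isolatedProposers Ct X ∧ X i = some u,
        ∏ j, proposalProb y j.1 (X j) =
      y i.1 u / 10 * ∏ v ∈ Ct.erase i.1,
        ∑ o with Disjoint (proposalEndpoints v o) {i.1, u}, proposalProb y v o := by
  let box (j : {v // v ∈ Ct}) : Finset (Option V) :=
    if j = i then {some u}
    else Finset.univ.filter fun o => Disjoint (proposalEndpoints j.1 o) {i.1, u}
  have hbox : Finset.univ.filter (fun X => i ∈ isolatedProposers Ct X ∧ X i = some u) =
      Fintype.piFinset box := by
    ext X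
    simp only [Finset.mem_filter, Finset.mem_univ, true_and, Fintype.mem_piFinset,
      mem_isolatedProposers]
    constructor
    · rintro ⟨⟨-, hdisj⟩, hXi⟩ j
      by_cases hj : j = i
      · simp [box, hj, hXi]
      · simpa [box, hj, hXi, proposalEndpoints] using (hdisj j hj).symm
    · intro hX
      have hXi : X i = some u := by simpa [box] using hX i
      refine ⟨⟨by simp [hXi], fun j hj => ?_⟩, hXi⟩
      simpa [box, hj, hXi, proposalEndpoints] using hX j
  have herase : Ct.erase i.1 = (Finset.univ.erase i).map (.subtype _) := by
    rw [Finset.map_erase, Finset.univ_eq_attach]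
    exact congrArg (Finset.erase · i.1) Finset.attach_map_val.symm
  rw [hbox, ← Finset.prod_univ_sum, ← Finset.mul_prod_erase _ _ (Finset.mem_univ i), herase,
    Finset.prod_map]
  congr 1
  · simp [box, proposalProb]
  · refine Finset.prod_congr rfl fun j hj => ?_
    simp only [box, if_neg (Finset.ne_of_mem_erase hj), Function.Embedding.subtype_apply]
    rfl

namespace IsFractionalMatching

theorem one_sub_sum_filter_disjoint_le (hy : IsFractionalMatching y) (v : V) (B : Finset V) :
    1 - ∑ o with Disjoint (proposalEndpoints v o) B, proposalProb y v o ≤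
      ((if v ∈ B then fractionalDegree y v else 0) + ∑ b ∈ B, y v b) / 10 := by
  rw [← sum_proposalProb y v, sub_le_iff_le_add', ← Finset.sum_filter_add_sum_filter_not
    Finset.univ (fun o => Disjoint (proposalEndpoints v o) B), add_le_add_iff_left]
  rw [Finset.sum_filter, Fintype.sum_option]
  by_cases hv : v ∈ B
  · have hB : 0 ≤ ∑ b ∈ B, y v b := Finset.sum_nonneg fun b _ => hy.nonneg v b
    simp only [proposalEndpoints, proposalProb, Option.elim, Finset.disjoint_empty_left, hv,
      not_true_eq_false, if_false, zero_add, Finset.disjoint_insert_left, false_and,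
      not_false_eq_true, if_true, ← Finset.sum_div]
    exact div_le_div_of_nonneg_right (le_add_of_nonneg_right hB) (by norm_num)
  · simp [proposalEndpoints, proposalProb, hv, Finset.sum_div]

theorem one_sub_le_prod_sum_filter_disjoint (hy : IsFractionalMatching y) (s B : Finset V) :
    1 - (∑ v ∈ s ∩ B, fractionalDegree y v + ∑ b ∈ B, fractionalDegree y b) / 10 ≤
      ∏ v ∈ s, ∑ o with Disjoint (proposalEndpoints v o) B, proposalProb y v o := by
  have hcross : ∑ v ∈ s, ∑ b ∈ B, y v b ≤ ∑ b ∈ B, fractionalDegree y b := by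
    rw [Finset.sum_comm]
    refine Finset.sum_le_sum fun b _ => ?_
    simp only [hy.symm _ b]
    exact Finset.sum_le_univ_sum_of_nonneg (hy.nonneg b)
  refine le_trans ?_ (one_sub_sum_one_sub_le_prod
    (fun v _ => Finset.sum_nonneg fun o _ => hy.proposalProb_nonneg v o)
    fun v _ => hy.sum_filter_proposalProb_le_one v _)
  refine sub_le_sub_left ((Finset.sum_le_sum fun v _ =>
    hy.one_sub_sum_filter_disjoint_le v B).trans ?_) _
  rw [← Finset.sum_div, Finset.sum_add_distrib, Finset.sum_ite_mem]
  gcongr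

theorem le_sum_filter_isolated_and_eq_some (hy : IsFractionalMatching y) (i : {v // v ∈ Ct})
    (u : V) :
    y i.1 u / 10 * (1 - ((if u ∈ Ct then fractionalDegree y u else 0) +
        (fractionalDegree y i.1 + fractionalDegree y u)) / 10) ≤
      ∑ X : {v // v ∈ Ct} → Option V with i ∈ isolatedProposers Ct X ∧ X i = some u,
        ∏ j, proposalProb y j.1 (X j) := by
  have hd := hy.fractionalDegree_nonneg
  have hinter : ∑ v ∈ Ct.erase i.1 ∩ {i.1, u}, fractionalDegree y v ≤
      if u ∈ Ct then fractionalDegree y u else 0 := by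
    rw [← Finset.sum_ite_eq' Ct u, ← Finset.sum_filter]
    refine Finset.sum_le_sum_of_subset_of_nonneg (fun v hv => ?_) fun v _ _ => hd v
    simp only [Finset.mem_inter, Finset.mem_erase, Finset.mem_insert, Finset.mem_singleton] at hv
    exact Finset.mem_filter.2 ⟨hv.1.2, hv.2.resolve_left hv.1.1⟩
  have hpair : ∑ b ∈ {i.1, u}, fractionalDegree y b ≤
      fractionalDegree y i.1 + fractionalDegree y u := by
    rcases eq_or_ne i.1 u with h | h
    · simp [h, hd u]
    · rw [Finset.sum_pair h]
  rw [sum_filter_isolated_and_eq_some]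
  refine mul_le_mul_of_nonneg_left (le_trans ?_ (hy.one_sub_le_prod_sum_filter_disjoint _ _))
    (div_nonneg (hy.nonneg _ _) (by norm_num))
  gcongr

theorem sum_le_sum_filter_isolated (hy : IsFractionalMatching y) (i : {v // v ∈ Ct}) :
    ∑ u, y i.1 u / 10 * (1 - ((if u ∈ Ct then fractionalDegree y u else 0) +
        (fractionalDegree y i.1 + fractionalDegree y u)) / 10) ≤
      ∑ X : {v // v ∈ Ct} → Option V with i ∈ isolatedProposers Ct X,
        ∏ j, proposalProb y j.1 (X j) := by
  rw [← Finset.sum_fiberwise _ (fun X : {v // v ∈ Ct} → Option V => X i), Fintype.sum_option]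
  simp only [Finset.filter_filter]
  refine le_add_of_nonneg_of_le
    (Finset.sum_nonneg fun X _ => Finset.prod_nonneg fun j _ => hy.proposalProb_nonneg _ _)
    (Finset.sum_le_sum fun u _ => hy.le_sum_filter_isolated_and_eq_some i u)

theorem mul_card_le_sum_sum (hy : IsFractionalMatching y)
    (hCt : ∀ v ∈ Ct, 1 / 2 ≤ fractionalDegree y v) :
    17 / 400 * (#Ct : ℝ) ≤
      ∑ v ∈ Ct, ∑ u, y v u / 10 * (1 - ((if u ∈ Ct then fractionalDegree y u else 0) +
        (fractionalDegree y v + fractionalDegree y u)) / 10) := by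
  set d := fractionalDegree y
  have hdeg (v : V) : ∑ u, y v u = d v := rfl
  have hd1 : ∀ v, d v ≤ 1 := hy.sum_le_one
  -- For `u ∈ Ct` the estimate needed below fails termwise; its defect `y v u * (d v - d u)` is
  -- antisymmetric in `u` and `v`, hence cancels in the double sum over `Ct`.
  have hcancel : ∑ v ∈ Ct, ∑ u, (if u ∈ Ct then y v u * (d v - d u) else 0) = 0 := by
    simpa using sum_sum_mul_sub_eq_zero Ct hy.symm d
  calc 17 / 400 * (#Ct : ℝ) = ∑ v ∈ Ct, (17 / 400 : ℝ) := by simp [mul_comm]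
    -- `t * (1 - 3 / 10 * t) / 10` is increasing on `[1/2, 1]`, with value `17 / 400` at `1/2`.
    _ ≤ ∑ v ∈ Ct, d v * ((1 - 3 / 10 * d v) / 10) := by
        refine Finset.sum_le_sum fun v hv => ?_
        nlinarith [hd1 v, hCt v hv]
    _ = ∑ v ∈ Ct, ∑ u, (y v u * ((1 - 3 / 10 * d v) / 10) +
          (if u ∈ Ct then y v u * (d v - d u) else 0) / 50) := by
        simp only [Finset.sum_add_distrib, ← Finset.sum_div, hcancel, zero_div, add_zero,
          ← Finset.sum_mul, hdeg]
    _ ≤ _ := by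
        refine Finset.sum_le_sum fun v hv => Finset.sum_le_sum fun u _ => ?_
        have hvu := hy.nonneg v u
        split_ifs
        · linarith
        · nlinarith [hd1 u, hCt v hv]

theorem mul_card_le_sum_prod_mul_card_isolatedProposers (hy : IsFractionalMatching y)
    (hCt : ∀ v ∈ Ct, 1 / 2 ≤ fractionalDegree y v) :
    17 / 400 * (#Ct : ℝ) ≤
      ∑ X : {v // v ∈ Ct} → Option V,
        (∏ j, proposalProb y j.1 (X j)) * #(isolatedProposers Ct X) := by
  refine (hy.mul_card_le_sum_sum hCt).trans ?_
  rw [← Finset.sum_coe_sort]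
  refine (Finset.sum_le_sum fun i _ => hy.sum_le_sum_filter_isolated i).trans_eq ?_
  simp only [Finset.sum_filter]
  rw [Finset.sum_comm]
  refine Finset.sum_congr rfl fun X _ => ?_
  rw [← Finset.sum_filter, Finset.filter_univ_mem, Finset.sum_const, nsmul_eq_mul, mul_comm]

theorem sum_filter_goodCount_lt_le (hy : IsFractionalMatching y)
    (hCt : ∀ v ∈ Ct, 1 / 2 ≤ fractionalDegree y v) :
    ∑ X : {v // v ∈ Ct} → Option V with ¬ (#Ct : ℝ) / 50 ≤ goodCount Ct X,
        ∏ i, proposalProb y i.1 (X i) ≤ Real.exp (-(#Ct : ℝ) / 5000) := by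
  have htail := (hasBoundedDifferences_card_isolatedProposers Ct).sum_filter_prod_le
    (fun i => hy.proposalProb_nonneg i.1) (fun i => sum_proposalProb y i.1)
    (s := 9 / 400 * (#Ct : ℝ)) (by positivity)
  have hexponent : -2 * (9 / 400 * (#Ct : ℝ)) ^ 2 / ∑ _i : {v // v ∈ Ct}, ((2 : ℝ≥0) : ℝ) ^ 2 ≤
      -(#Ct : ℝ) / 5000 := by
    rcases Ct.card.eq_zero_or_pos with hn | hn
    · simp [hn]
    · have : (0 : ℝ) < #Ct := mod_cast hn
      simp only [Finset.sum_const, Finset.card_univ, Fintype.card_coe, nsmul_eq_mul,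
        NNReal.coe_ofNat]
      field_simp
      norm_num
  refine le_trans (Finset.sum_le_sum_of_subset_of_nonneg (fun X hX => ?_) fun X _ _ =>
    Finset.prod_nonneg fun i _ => hy.proposalProb_nonneg _ _)
    (htail.trans (Real.exp_le_exp.2 hexponent))
  have hgood := (Finset.mem_filter.1 hX).2
  have hiso : (#(isolatedProposers Ct X) : ℝ) ≤ goodCount Ct X :=
    mod_cast card_isolatedProposers_le_goodCount
  simp only [Finset.mem_filter, Finset.mem_univ, true_and]
  linarith [hy.mul_card_le_sum_prod_mul_card_isolatedProposers hCt]

end IsFractionalMatching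

theorem sum_prod_proposalProb (y : V → V → ℝ) (Ct : Finset V) :
    ∑ X : {v // v ∈ Ct} → Option V, ∏ i, proposalProb y i.1 (X i) = 1 := by
  rw [← Fintype.piFinset_univ, ← Finset.prod_univ_sum]
  simp only [sum_proposalProb, Finset.prod_const_one]

end Expectation

section Graph

variable (G : SimpleGraph V) [DecidableRel G.Adj] (x : Sym2 V → ℝ)

/-- The weight matrix of the edge weighting `x` of `G`. -/
def weightMatrix (v u : V) : ℝ :=
  if G.Adj v u then x s(v, u) else 0

variable [Fintype V] [DecidableEq V]

theorem sum_incident_edges_eq (v : V) :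
    ∑ e ∈ G.edgeFinset.filter (fun e => v ∈ e), x e = fractionalDegree (weightMatrix G x) v := by
  simp only [fractionalDegree, weightMatrix]
  rw [← Finset.sum_filter]
  symm
  refine Finset.sum_nbij (fun u => s(v, u)) (fun u hu => ?_) (fun a _ b _ h => ?_)
    (fun e he => ?_) fun _ _ => rfl
  · simpa using hu
  · exact Sym2.congr_right.1 h
  · obtain ⟨he, u, rfl⟩ := by simpa using he
    exact ⟨u, by simpa using he, rfl⟩

variable {G x}

theorem isFractionalMatching_weightMatrix (hx0 : ∀ e ∈ G.edgeFinset, 0 ≤ x e)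
    (hfm : ∀ v : V, ∑ e ∈ G.edgeFinset.filter (fun e => v ∈ e), x e ≤ 1) :
    IsFractionalMatching (weightMatrix G x) where
  nonneg v u := by
    unfold weightMatrix
    split_ifs with h
    · exact hx0 _ (by simpa using h)
    · exact le_rfl
  symm v u := by simp only [weightMatrix, G.adj_comm v u, Sym2.eq_swap]
  sum_le_one v := (sum_incident_edges_eq G x v).ge.trans (hfm v)

theorem roundWeight_eq_prod (Ct : Finset V) (X : {v // v ∈ Ct} → Option V) :
    roundWeight G x Ct X = ∏ i, proposalProb (weightMatrix G x) i.1 (X i) := by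
  refine Finset.prod_congr rfl fun i _ => ?_
  cases X i with
  | none => simp only [proposalProb, sum_incident_edges_eq]
  | some u => simp only [proposalProb, weightMatrix, ite_div, zero_div]

end Graph

/-- In the randomized rounding process applied to a fractional matching `x`
of `G` and a set `C̃` of vertices each of fractional weight at least `1 - β` (`0 < β ≤ 1/2`),
with probability at least `1 - 2·exp(-|C̃|/5000)` the number of good edges satisfies
`f(X) ≥ |C̃|/50`; in particular, with this probability the process yields a matching of `G`
of size at least `|C̃|/50`. -/
theorem rounding_success_probability [Fintype V] [DecidableEq V] (G : SimpleGraph V)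
    [DecidableRel G.Adj] (x : Sym2 V → ℝ)
    (hx0 : ∀ e ∈ G.edgeFinset, 0 ≤ x e) (hx1 : ∀ e ∈ G.edgeFinset, x e ≤ 1)
    (hfm : ∀ v : V, ∑ e ∈ G.edgeFinset.filter (fun e => v ∈ e), x e ≤ 1)
    (β : ℝ) (hβ0 : 0 < β) (hβ1 : β ≤ 1 / 2)
    (Ct : Finset V)
    (hCt : ∀ v ∈ Ct, 1 - β ≤ ∑ e ∈ G.edgeFinset.filter (fun e => v ∈ e), x e) :
    1 - 2 * Real.exp (-(Ct.card : ℝ) / 5000) ≤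
      ∑ X ∈ Finset.univ.filter
          (fun X : {v // v ∈ Ct} → Option V => (Ct.card : ℝ) / 50 ≤ (goodCount Ct X : ℝ)),
        roundWeight G x Ct X := by
  have hy := isFractionalMatching_weightMatrix hx0 hfm
  have hdeg : ∀ v ∈ Ct, 1 / 2 ≤ fractionalDegree (weightMatrix G x) v := fun v hv => by
    rw [← sum_incident_edges_eq]
    linarith [hCt v hv]
  have hbad := hy.sum_filter_goodCount_lt_le hdeg
  have htotal := sum_prod_proposalProb (weightMatrix G x) Ct
  rw [← Finset.sum_filter_add_sum_filter_not _
    (fun X : {v // v ∈ Ct} → Option V => (#Ct : ℝ) / 50 ≤ goodCount Ct X)] at htotal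
  simp only [roundWeight_eq_prod]
  linarith [Real.exp_pos (-(#Ct : ℝ) / 5000)]
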